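/- arXiv:math/0407294 — 2 statements merged into one kernel-verified Lean document; each statement's English description precedes it below -/
import Mathlib

section
/- Let V, P and U be Banach spaces, and let B: V → L(U;P) satisfy Hypothesis (C) with difference kernel C, local bounds M_B(r), M_C(r) and exponent ε∈(0,1]. Let γ,κ∈(0,1) with γ+κε>1, τ∈(0,1], X∈C^γ([0,τ];U), and let Y, Y' ∈ C^κ([0,τ];V) with Y(0)=Y'(0), Hölder constants at most R and sup norms at most R̃. Define the Young integrals Z(t)=∫_0^t B(Y(s))dX(s) and Z'(t)=∫_0^t B(Y'(s))dX(s). Then H_{γ,τ}(Z−Z';P) ≤ K'_τ · H_{κ,τ}(Y−Y';V), where K'_τ = K_{γ+κε} H_{γ,τ}(X;U) ( 3M_C(R̃)(2R)^ε τ^κ + M_B(R̃)τ^{(1−ε)κ} + M_B(R̃)τ^κ ) and K_{γ+κε} is the Young-integral constant depending only on γ+κε; in particular K'_τ → 0 as τ → 0. -/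
/-- **Hypothesis (C)** for a map `B : V → L(U;P)` (`V`, `P`, `U` Banach spaces):
there is a difference kernel `Cc` from `V` to bounded bilinear maps `V × U → P`
with `B(y')x - B(y)x = ∫_0^1 C(y + r(y'-y))(y'-y, x) dr`, local bounds
`M_B(r) = sup_{‖y‖ ≤ r} ‖C(y)‖ < ∞`, and a local `ε`-Hölder estimate for
`y ↦ C(y)` with increasing constants `M_C(r) > 0`, `ε ∈ (0,1]`. -/
def HypCplain {V P U : Type*} [NormedAddCommGroup V] [NormedSpace ℝ V]
    [NormedAddCommGroup P] [NormedSpace ℝ P]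
    [NormedAddCommGroup U] [NormedSpace ℝ U]
    (B : V → (U →L[ℝ] P)) (Cc : V → V →ₗ[ℝ] U →ₗ[ℝ] P)
    (MB MC : ℝ → ℝ) (ε : ℝ) : Prop :=
  (∀ y y' : V, ∀ x : U,
      B y' x - B y x = ∫ r in (0:ℝ)..1, Cc (y + r • (y' - y)) (y' - y) x) ∧
  (∀ r : ℝ, ∀ y : V, ‖y‖ ≤ r → ∀ (z : V) (x : U),
      ‖Cc y z x‖ ≤ MB r * ‖z‖ * ‖x‖) ∧
  Monotone MC ∧ (∀ r : ℝ, 0 < MC r) ∧ 0 < ε ∧ ε ≤ 1 ∧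
  (∀ r : ℝ, ∀ y y' : V, ‖y‖ ≤ r → ‖y'‖ ≤ r → ∀ (z : V) (x : U),
      ‖Cc y' z x - Cc y z x‖ ≤ MC r * ‖y' - y‖ ^ ε * ‖z‖ * ‖x‖)

open Filter Topology

section YoungSums

variable {P U : Type*} [NormedAddCommGroup P] [NormedSpace ℝ P]
  [NormedAddCommGroup U] [NormedSpace ℝ U]

/-- `z` is the limit, as the mesh tends to zero, of the left-point Riemann sums of `F` against `X`
over partitions of `[0, t]`. -/
def IsYoungIntegral (F : ℝ → U →L[ℝ] P) (X : ℝ → U) (t : ℝ) (z : P) : Prop :=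
  ∀ ε' > (0 : ℝ), ∃ d > (0 : ℝ), ∀ (n : ℕ) (σ : ℕ → ℝ),
    σ 0 = 0 → σ n = t → (∀ i < n, σ i ≤ σ (i + 1)) → (∀ i < n, σ (i + 1) - σ i < d) →
    ‖(∑ i ∈ Finset.range n, F (σ i) (X (σ (i + 1)) - X (σ i))) - z‖ < ε'

/-- The left-point Riemann sum over the partition of `[a, b]` into `2 ^ n` equal intervals. -/
noncomputable def dyadicSum (F : ℝ → U →L[ℝ] P) (X : ℝ → U) (a b : ℝ) (n : ℕ) : P :=
  ∑ i ∈ Finset.range (2 ^ n), F (a + i * ((b - a) / 2 ^ n))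
    (X (a + (i + 1 : ℕ) * ((b - a) / 2 ^ n)) - X (a + i * ((b - a) / 2 ^ n)))

theorem eventually_div_two_pow_lt (c : ℝ) {d : ℝ} (hd : 0 < d) :
    ∀ᶠ n : ℕ in atTop, c / 2 ^ n < d := by
  have h : Tendsto (fun n : ℕ => c / (2 : ℝ) ^ n) atTop (𝓝 0) :=
    tendsto_const_nhds.div_atTop (tendsto_pow_atTop_atTop_of_one_lt one_lt_two)
  exact h.eventually (gt_mem_nhds hd)

theorem IsYoungIntegral.tendsto_dyadicSum_zero {F : ℝ → U →L[ℝ] P} {X : ℝ → U} {t : ℝ} {z : P}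
    (h : IsYoungIntegral F X t z) (ht : 0 ≤ t) :
    Tendsto (dyadicSum F X 0 t) atTop (𝓝 z) := by
  rw [Metric.tendsto_nhds]
  intro e he
  obtain ⟨d, hd, H⟩ := h e he
  filter_upwards [eventually_div_two_pow_lt t hd] with n hn
  have hstep : 0 ≤ t / 2 ^ n := by positivity
  have := H (2 ^ n) (fun i => 0 + i * ((t - 0) / 2 ^ n)) (by simp) (by push_cast; field_simp; ring)
    (fun i _ => by push_cast; simp only [sub_zero]; linarith)
    (fun i _ => by push_cast; simp only [sub_zero]; linarith)
  rw [dist_eq_norm]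
  exact this

theorem IsYoungIntegral.tendsto_dyadicSum {F : ℝ → U →L[ℝ] P} {X : ℝ → U} {s t : ℝ} {zs zt : P}
    (h_s : IsYoungIntegral F X s zs) (h_t : IsYoungIntegral F X t zt) (hs : 0 ≤ s) (hst : s ≤ t) :
    Tendsto (dyadicSum F X s t) atTop (𝓝 (zt - zs)) := by
  have hsum : Tendsto (fun n => dyadicSum F X 0 s n + dyadicSum F X s t n) atTop (𝓝 zt) := by
    rw [Metric.tendsto_nhds]
    intro e he
    obtain ⟨d, hd, H⟩ := h_t e he
    filter_upwards [eventually_div_two_pow_lt s hd, eventually_div_two_pow_lt (t - s) hd]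
      with n hn hn'
    have hstep : 0 ≤ s / 2 ^ n := by positivity
    have hstep' : 0 ≤ (t - s) / 2 ^ n := div_nonneg (by linarith) (by positivity)
    set σ : ℕ → ℝ := fun i => if i ≤ 2 ^ n then i * (s / 2 ^ n)
      else s + ((i : ℝ) - 2 ^ n) * ((t - s) / 2 ^ n) with hσ
    have hleft : ∀ i ≤ 2 ^ n, σ i = 0 + i * ((s - 0) / 2 ^ n) := by
      intro i hi
      simp [hσ, hi]
    have hright : ∀ i, σ (2 ^ n + i) = s + i * ((t - s) / 2 ^ n) := by
      intro i
      rcases Nat.eq_zero_or_pos i with rfl | hi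
      · simp only [hσ, add_zero, le_refl, if_true]
        push_cast
        field_simp
        ring
      · have : ¬ (2 ^ n + i ≤ 2 ^ n) := by omega
        simp only [hσ, this, if_false]
        push_cast
        ring
    have hinc : ∀ i, σ (i + 1) - σ i = s / 2 ^ n ∨ σ (i + 1) - σ i = (t - s) / 2 ^ n := by
      intro i
      rcases Nat.lt_or_ge i (2 ^ n) with hi | hi
      · left
        rw [hleft i hi.le, hleft (i + 1) hi]
        push_cast
        ring
      · right
        obtain ⟨j, rfl⟩ := Nat.exists_eq_add_of_le hi
        rw [add_assoc, hright, hright]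
        push_cast
        ring
    have key := H (2 ^ n + 2 ^ n) σ (by simp [hσ])
      (by rw [hright]; push_cast; field_simp; ring)
      (fun i _ => by rcases hinc i with h | h <;> linarith)
      (fun i _ => by rcases hinc i with h | h <;> linarith)
    have hsplit : dyadicSum F X 0 s n + dyadicSum F X s t n =
        ∑ i ∈ Finset.range (2 ^ n + 2 ^ n), F (σ i) (X (σ (i + 1)) - X (σ i)) := by
      rw [Finset.sum_range_add]
      congr 1
      · refine Finset.sum_congr rfl fun i hi => ?_
        have hi := Finset.mem_range.1 hi
        rw [hleft i hi.le, hleft (i + 1) hi]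
      · refine Finset.sum_congr rfl fun i _ => ?_
        rw [add_assoc, hright, hright]
    rw [dist_eq_norm, hsplit]
    exact key
  simpa using hsum.sub (h_s.tendsto_dyadicSum_zero hs)

theorem Finset.sum_range_mul_two {M : Type*} [AddCommMonoid M] (f : ℕ → M) (n : ℕ) :
    ∑ i ∈ Finset.range (n * 2), f i = ∑ i ∈ Finset.range n, (f (2 * i) + f (2 * i + 1)) := by
  induction n with
  | zero => simp
  | succ k ih =>
    rw [Finset.sum_range_succ, ← ih, show (k + 1) * 2 = k * 2 + 1 + 1 by ring,
      Finset.sum_range_succ, Finset.sum_range_succ, mul_comm k 2, add_assoc]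

/-- The constant in the Young–Loève estimate for total regularity `θ`. -/
noncomputable def youngConst (θ : ℝ) : ℝ := (1 - (2 : ℝ) ^ (1 - θ))⁻¹

theorem two_rpow_one_sub_lt_one {θ : ℝ} (hθ : 1 < θ) : (2 : ℝ) ^ (1 - θ) < 1 :=
  Real.rpow_lt_one_of_one_lt_of_neg one_lt_two (by linarith)

theorem one_le_youngConst {θ : ℝ} (hθ : 1 < θ) : 1 ≤ youngConst θ := by
  have h1 := two_rpow_one_sub_lt_one hθ
  have h2 : (0 : ℝ) < 2 ^ (1 - θ) := by positivity
  exact (one_le_inv₀ (by linarith)).2 (by linarith)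

variable {D : ℝ → U →L[ℝ] P} {X : ℝ → U} {τ γ β HX L s t : ℝ}

theorem norm_dyadicSum_succ_sub_le (hL : 0 ≤ L)
    (hX : ∀ s t : ℝ, 0 ≤ s → s ≤ t → t ≤ τ → ‖X t - X s‖ ≤ HX * (t - s) ^ γ)
    (hD : ∀ s t : ℝ, 0 ≤ s → s ≤ t → t ≤ τ → ∀ x, ‖D t x - D s x‖ ≤ L * (t - s) ^ β * ‖x‖)
    (hHX : 0 ≤ HX) (hθ : 1 < γ + β) (hs : 0 ≤ s) (hst : s < t) (ht : t ≤ τ) (n : ℕ) :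
    ‖dyadicSum D X s t (n + 1) - dyadicSum D X s t n‖ ≤
      L * HX * (t - s) ^ (γ + β) * ((2 : ℝ) ^ (1 - (γ + β))) ^ n := by
  set h : ℝ := (t - s) / 2 ^ (n + 1) with hh
  have hpos : 0 < h := div_pos (by linarith) (by positivity)
  have h2 : (t - s) / 2 ^ n = 2 * h := by rw [hh, pow_succ]; field_simp
  have hterm : dyadicSum D X s t (n + 1) - dyadicSum D X s t n =
      ∑ i ∈ Finset.range (2 ^ n), (D (s + (2 * i + 1 : ℕ) * h) - D (s + (2 * i : ℕ) * h))
        (X (s + (2 * i + 2 : ℕ) * h) - X (s + (2 * i + 1 : ℕ) * h)) := by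
    simp only [dyadicSum, h2, ← hh]
    rw [pow_succ, Finset.sum_range_mul_two, ← Finset.sum_sub_distrib]
    refine Finset.sum_congr rfl fun i _ => ?_
    have e1 : s + (i : ℝ) * (2 * h) = s + (2 * i : ℕ) * h := by push_cast; ring
    have e2 : s + ((i + 1 : ℕ) : ℝ) * (2 * h) = s + (2 * i + 2 : ℕ) * h := by push_cast; ring
    rw [e1, e2]
    simp only [sub_apply, map_sub]
    abel
  have hbound : ∀ i ∈ Finset.range (2 ^ n),
      ‖(D (s + (2 * i + 1 : ℕ) * h) - D (s + (2 * i : ℕ) * h))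
        (X (s + (2 * i + 2 : ℕ) * h) - X (s + (2 * i + 1 : ℕ) * h))‖ ≤
        L * HX * h ^ (γ + β) := by
    intro i hi
    have hi : i + 1 ≤ 2 ^ n := Finset.mem_range.1 hi
    have hi' : ((2 * i + 2 : ℕ) : ℝ) ≤ 2 ^ (n + 1) := by
      rw [pow_succ]; exact_mod_cast (by omega : 2 * i + 2 ≤ 2 ^ n * 2)
    have hend : s + (2 * i + 2 : ℕ) * h ≤ τ := by
      have : ((2 * i + 2 : ℕ) : ℝ) * h ≤ 2 ^ (n + 1) * h := by gcongr
      have h3 : 2 ^ (n + 1) * h = t - s := by rw [hh]; field_simp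
      linarith
    have hmid : s + (2 * i + 1 : ℕ) * h ≤ s + (2 * i + 2 : ℕ) * h := by gcongr; omega
    have hlow : s + (2 * i : ℕ) * h ≤ s + (2 * i + 1 : ℕ) * h := by gcongr; omega
    have h0 : 0 ≤ s + (2 * i : ℕ) * h := by positivity
    have bX := hX _ _ (h0.trans hlow) hmid hend
    have bD := hD _ _ h0 hlow (hmid.trans hend)
      (X (s + (2 * i + 2 : ℕ) * h) - X (s + (2 * i + 1 : ℕ) * h))
    have d1 : s + (2 * i + 2 : ℕ) * h - (s + (2 * i + 1 : ℕ) * h) = h := by push_cast; ring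
    have d2 : s + (2 * i + 1 : ℕ) * h - (s + (2 * i : ℕ) * h) = h := by push_cast; ring
    rw [d1] at bX
    rw [d2] at bD
    rw [sub_apply]
    refine bD.trans ((mul_le_mul_of_nonneg_left bX (by positivity)).trans_eq ?_)
    rw [Real.rpow_add hpos]
    ring
  rw [hterm]
  refine (norm_sum_le_of_le _ hbound).trans ?_
  rw [Finset.sum_const, Finset.card_range, nsmul_eq_mul]
  have hts : 0 ≤ t - s := by linarith
  have hle : h ^ (γ + β) ≤ (t - s) ^ (γ + β) * ((2 : ℝ) ^ (γ + β))⁻¹ ^ n := by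
    have : h ≤ (t - s) / 2 ^ n := by rw [h2]; linarith
    refine (Real.rpow_le_rpow hpos.le this (by linarith)).trans_eq ?_
    rw [Real.div_rpow hts (by positivity), inv_pow, div_eq_mul_inv, ← Real.rpow_natCast,
      ← Real.rpow_natCast, ← Real.rpow_mul (by norm_num), ← Real.rpow_mul (by norm_num),
      mul_comm (n : ℝ)]
  calc ((2 ^ n : ℕ) : ℝ) * (L * HX * h ^ (γ + β))
      ≤ ((2 ^ n : ℕ) : ℝ) * (L * HX * ((t - s) ^ (γ + β) * ((2 : ℝ) ^ (γ + β))⁻¹ ^ n)) := by gcongr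
    _ = _ := by
      rw [Real.rpow_sub two_pos, Real.rpow_one, div_eq_mul_inv, mul_pow]
      push_cast
      ring

theorem norm_dyadicSum_sub_le (hL : 0 ≤ L)
    (hX : ∀ s t : ℝ, 0 ≤ s → s ≤ t → t ≤ τ → ‖X t - X s‖ ≤ HX * (t - s) ^ γ)
    (hD : ∀ s t : ℝ, 0 ≤ s → s ≤ t → t ≤ τ → ∀ x, ‖D t x - D s x‖ ≤ L * (t - s) ^ β * ‖x‖)
    (hHX : 0 ≤ HX) (hθ : 1 < γ + β) (hs : 0 ≤ s) (hst : s < t) (ht : t ≤ τ) (n : ℕ) :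
    ‖dyadicSum D X s t n - D s (X t - X s)‖ ≤
      L * HX * (t - s) ^ (γ + β) * youngConst (γ + β) := by
  have hts : 0 ≤ t - s := by linarith
  have hzero : dyadicSum D X s t 0 = D s (X t - X s) := by simp [dyadicSum]
  rw [← hzero, ← Finset.sum_range_sub]
  refine (norm_sum_le_of_le _ fun k _ =>
    norm_dyadicSum_succ_sub_le hL hX hD hHX hθ hs hst ht k).trans ?_
  rw [← Finset.mul_sum]
  have hq : (0 : ℝ) ≤ 2 ^ (1 - (γ + β)) := by positivity
  refine mul_le_mul_of_nonneg_left ?_ (by positivity)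
  rw [youngConst, ← tsum_geometric_of_lt_one hq (two_rpow_one_sub_lt_one hθ)]
  exact (summable_geometric_of_lt_one hq (two_rpow_one_sub_lt_one hθ)).sum_le_tsum _
    fun i _ => by positivity

/-- Young–Loève estimate for the increments of the difference of two Young integrals. -/
theorem norm_sub_youngIntegral_le {F F' : ℝ → U →L[ℝ] P} {Z Z' : ℝ → P} {A : ℝ} (hL : 0 ≤ L)
    (hX : ∀ s t : ℝ, 0 ≤ s → s ≤ t → t ≤ τ → ‖X t - X s‖ ≤ HX * (t - s) ^ γ)
    (hA : ∀ s : ℝ, 0 ≤ s → s ≤ τ → ∀ x, ‖F s x - F' s x‖ ≤ A * ‖x‖)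
    (hD : ∀ s t : ℝ, 0 ≤ s → s ≤ t → t ≤ τ → ∀ x,
      ‖(F t x - F' t x) - (F s x - F' s x)‖ ≤ L * (t - s) ^ β * ‖x‖)
    (hZ : ∀ t ∈ Set.Icc (0 : ℝ) τ, IsYoungIntegral F X t (Z t))
    (hZ' : ∀ t ∈ Set.Icc (0 : ℝ) τ, IsYoungIntegral F' X t (Z' t))
    (hA0 : 0 ≤ A) (hHX : 0 ≤ HX) (hβ : 0 ≤ β) (hθ : 1 < γ + β) (hτ : τ ≤ 1)
    (hs : 0 ≤ s) (hst : s ≤ t) (ht : t ≤ τ) :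
    ‖(Z t - Z' t) - (Z s - Z' s)‖ ≤
      HX * (A + youngConst (γ + β) * L) * (t - s) ^ γ := by
  have hK := one_le_youngConst hθ
  rcases hst.eq_or_lt with rfl | hlt
  · have : (0 : ℝ) ≤ (s - s) ^ γ := Real.rpow_nonneg (by simp) _
    simp only [sub_self, norm_zero] at this ⊢
    positivity
  have hpos : 0 < t - s := by linarith
  have ms : s ∈ Set.Icc (0 : ℝ) τ := ⟨hs, hst.trans ht⟩
  have mt : t ∈ Set.Icc (0 : ℝ) τ := ⟨hs.trans hst, ht⟩
  have hlim : Tendsto (dyadicSum (fun r => F r - F' r) X s t) atTop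
      (𝓝 ((Z t - Z s) - (Z' t - Z' s))) := by
    have := ((hZ s ms).tendsto_dyadicSum (hZ t mt) hs hst).sub
      ((hZ' s ms).tendsto_dyadicSum (hZ' t mt) hs hst)
    refine this.congr fun n => ?_
    simp only [dyadicSum, ← Finset.sum_sub_distrib, sub_apply]
  have hbd := le_of_tendsto
    (hlim.sub_const ((F s - F' s) (X t - X s))).norm (Eventually.of_forall fun n =>
      norm_dyadicSum_sub_le (D := fun r => F r - F' r) hL hX hD hHX hθ hs hlt ht n)
  have hfirst : ‖(F s - F' s) (X t - X s)‖ ≤ A * (HX * (t - s) ^ γ) :=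
    (hA s hs (hst.trans ht) _).trans (mul_le_mul_of_nonneg_left (hX s t hs hst ht) hA0)
  have hone : (t - s) ^ β ≤ 1 := Real.rpow_le_one hpos.le (by linarith) hβ
  have hsecond : L * HX * (t - s) ^ (γ + β) * youngConst (γ + β) ≤
      L * HX * (t - s) ^ γ * youngConst (γ + β) := by
    rw [Real.rpow_add hpos]
    have : (t - s) ^ γ * (t - s) ^ β ≤ (t - s) ^ γ := mul_le_of_le_one_right (by positivity) hone
    gcongr
  have heq : (Z t - Z' t) - (Z s - Z' s) =
      ((Z t - Z s) - (Z' t - Z' s) - (F s - F' s) (X t - X s)) + (F s - F' s) (X t - X s) := by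
    abel
  rw [heq]
  refine (norm_add_le _ _).trans ?_
  linarith

end YoungSums

namespace HypCplain

variable {V P U : Type*} [NormedAddCommGroup V] [NormedSpace ℝ V]
  [NormedAddCommGroup P] [NormedSpace ℝ P] [NormedAddCommGroup U] [NormedSpace ℝ U]
  {B : V → (U →L[ℝ] P)} {Cc : V → V →ₗ[ℝ] U →ₗ[ℝ] P} {MB MC : ℝ → ℝ} {ε ρ : ℝ}

theorem localBound_nonneg [Nontrivial V] [Nontrivial U] (h : HypCplain B Cc MB MC ε)
    (hρ : 0 ≤ ρ) : 0 ≤ MB ρ := by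
  obtain ⟨z, hz⟩ := exists_ne (0 : V)
  obtain ⟨x, hx⟩ := exists_ne (0 : U)
  have hb := (norm_nonneg _).trans (h.2.1 ρ 0 (by simpa using hρ) z x)
  have hz' := norm_pos_iff.2 hz
  have hx' := norm_pos_iff.2 hx
  by_contra! hneg
  have : MB ρ * ‖z‖ * ‖x‖ < 0 := mul_neg_of_neg_of_pos (mul_neg_of_neg_of_pos hneg hz') hx'
  linarith

theorem norm_segment_le {a b : V} (ha : ‖a‖ ≤ ρ) (hb : ‖b‖ ≤ ρ) {r : ℝ}
    (hr : r ∈ Set.Icc (0 : ℝ) 1) : ‖a + r • (b - a)‖ ≤ ρ := by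
  have := (convex_closedBall (0 : V) ρ).add_smul_sub_mem (x := a) (y := b)
    (by simpa using ha) (by simpa using hb) hr
  simpa using this

theorem norm_sub_apply_le (h : HypCplain B Cc MB MC ε) {y y' : V} (hy : ‖y‖ ≤ ρ)
    (hy' : ‖y'‖ ≤ ρ) (x : U) : ‖B y' x - B y x‖ ≤ MB ρ * ‖y' - y‖ * ‖x‖ := by
  rw [h.1 y y' x]
  have := intervalIntegral.norm_integral_le_of_norm_le_const (a := 0) (b := 1)
    (f := fun r : ℝ => Cc (y + r • (y' - y)) (y' - y) x) (C := MB ρ * ‖y' - y‖ * ‖x‖) ?_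
  · simpa using this
  · intro r hr
    rw [Set.uIoc_of_le zero_le_one] at hr
    exact h.2.1 ρ _ (norm_segment_le hy hy' ⟨hr.1.le, hr.2⟩) _ _

theorem intervalIntegrable_kernel (h : HypCplain B Cc MB MC ε) {y y' : V} (hy : ‖y‖ ≤ ρ)
    (hy' : ‖y'‖ ≤ ρ) (x : U) :
    IntervalIntegrable (fun r : ℝ => Cc (y + r • (y' - y)) (y' - y) x)
      MeasureTheory.volume 0 1 := by
  obtain ⟨-, -, -, -, hε, -, hC⟩ := h
  refine ContinuousOn.intervalIntegrable ?_
  rw [Set.uIcc_of_le zero_le_one]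
  intro r hr
  rw [ContinuousWithinAt, tendsto_iff_norm_sub_tendsto_zero]
  have hlim : Tendsto (fun q : ℝ =>
      MC ρ * ‖(y + q • (y' - y)) - (y + r • (y' - y))‖ ^ ε * ‖y' - y‖ * ‖x‖)
      (𝓝[Set.Icc 0 1] r) (𝓝 0) := by
    have hc : Continuous (fun q : ℝ =>
        MC ρ * ‖(y + q • (y' - y)) - (y + r • (y' - y))‖ ^ ε * ‖y' - y‖ * ‖x‖) := by
      have : Continuous fun q : ℝ => ‖(y + q • (y' - y)) - (y + r • (y' - y))‖ ^ ε :=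
        Continuous.rpow_const (by fun_prop) fun _ => Or.inr hε.le
      fun_prop
    have := hc.tendsto r
    simp only [sub_self, norm_zero, Real.zero_rpow hε.ne', mul_zero, zero_mul] at this
    exact this.mono_left nhdsWithin_le_nhds
  refine squeeze_zero' (Eventually.of_forall fun _ => norm_nonneg _) ?_ hlim
  filter_upwards [self_mem_nhdsWithin] with q hq
  exact hC ρ _ _ (norm_segment_le hy hy' hr) (norm_segment_le hy hy' hq) _ _

theorem norm_sub_sub_apply_le (h : HypCplain B Cc MB MC ε) {a a' b b' : V} {δ : ℝ}
    (ha : ‖a‖ ≤ ρ) (ha' : ‖a'‖ ≤ ρ) (hb : ‖b‖ ≤ ρ) (hb' : ‖b'‖ ≤ ρ)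
    (hab : ‖b - a‖ ≤ δ) (hab' : ‖b' - a'‖ ≤ δ) (x : U) :
    ‖(B b x - B b' x) - (B a x - B a' x)‖ ≤
      (MC ρ * δ ^ ε * ‖b - b'‖ + MB ρ * ‖(b - b') - (a - a')‖) * ‖x‖ := by
  rw [h.1 b' b x, h.1 a' a x, ← intervalIntegral.integral_sub
    (h.intervalIntegrable_kernel hb' hb x) (h.intervalIntegrable_kernel ha' ha x)]
  have := intervalIntegral.norm_integral_le_of_norm_le_const (a := 0) (b := 1)
    (f := fun r : ℝ => Cc (b' + r • (b - b')) (b - b') x - Cc (a' + r • (a - a')) (a - a') x)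
    (C := (MC ρ * δ ^ ε * ‖b - b'‖ + MB ρ * ‖(b - b') - (a - a')‖) * ‖x‖) ?_
  · simpa using this
  · intro r hr
    rw [Set.uIoc_of_le zero_le_one] at hr
    have hr' : r ∈ Set.Icc (0 : ℝ) 1 := ⟨hr.1.le, hr.2⟩
    obtain ⟨-, hB, -, hMC, hε, -, hC⟩ := h
    have e : Cc (b' + r • (b - b')) (b - b') x - Cc (a' + r • (a - a')) (a - a') x =
        (Cc (b' + r • (b - b')) (b - b') x - Cc (a' + r • (a - a')) (b - b') x) +
          Cc (a' + r • (a - a')) ((b - b') - (a - a')) x := by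
      rw [map_sub (Cc (a' + r • (a - a'))) (b - b') (a - a'), LinearMap.sub_apply]
      abel
    have hseg : ‖(b' + r • (b - b')) - (a' + r • (a - a'))‖ ≤ δ := by
      have e' : (b' + r • (b - b')) - (a' + r • (a - a')) =
          (b' - a') + r • ((b - a) - (b' - a')) := by module
      rw [e']
      exact norm_segment_le hab' hab hr'
    have hpow := Real.rpow_le_rpow (norm_nonneg _) hseg hε.le
    have h1 := hC ρ _ _ (norm_segment_le ha' ha hr') (norm_segment_le hb' hb hr') (b - b') x
    have h2 := hB ρ _ (norm_segment_le ha' ha hr') ((b - b') - (a - a')) x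
    have h3 : MC ρ * ‖(b' + r • (b - b')) - (a' + r • (a - a'))‖ ^ ε * ‖b - b'‖ * ‖x‖ ≤
        MC ρ * δ ^ ε * ‖b - b'‖ * ‖x‖ := by
      have := (hMC ρ).le
      gcongr
    rw [e]
    refine (norm_add_le _ _).trans ?_
    linarith

end HypCplain

/-- **The contraction estimate `H_{γ,τ}(Z - Z';P) ≤ K'_τ H_{κ,τ}(Y - Y';V)` in the
proof of Theorem `thm-2`.**  Let `B : V → L(U;P)` satisfy Hypothesis (C), let
`γ, κ ∈ (0,1)` with `γ + κε > 1`, `τ ∈ (0,1]`, `X ∈ C^γ([0,τ];U)` (constant `HX`),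
and let `Y, Y' ∈ C^κ([0,τ];V)` with `Y(0) = Y'(0)`, Hölder constants at most `R`
and sup norms at most `Rt`.  If `Z, Z'` are the Young integrals
`Z(t) = ∫_0^t B(Y(s)) dX(s)` and `Z'(t) = ∫_0^t B(Y'(s)) dX(s)` then
`H_{γ,τ}(Z - Z';P) ≤ K'_τ · H_{κ,τ}(Y - Y';V)` where
`K'_τ = K_{γ+κε} · HX · (3 M_C(Rt)(2R)^ε τ^κ + M_B(Rt) τ^{(1-ε)κ} + M_B(Rt) τ^κ)`
and `K_{γ+κε}` depends only on `γ + κε` (so `K'_τ → 0` as `τ → 0`). -/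
theorem contraction_estimate
    {V P U : Type*} [NormedAddCommGroup V] [NormedSpace ℝ V] [CompleteSpace V]
    [NormedAddCommGroup P] [NormedSpace ℝ P] [CompleteSpace P]
    [NormedAddCommGroup U] [NormedSpace ℝ U]
    (γ κ ε : ℝ) (hγ0 : 0 < γ) (hγ1 : γ < 1) (hκ0 : 0 < κ) (hκ1 : κ < 1)
    (hγκε : 1 < γ + κ * ε) :
    ∃ K : ℝ, ∀ (B : V → (U →L[ℝ] P)) (Cc : V → V →ₗ[ℝ] U →ₗ[ℝ] P) (MB MC : ℝ → ℝ),
      HypCplain B Cc MB MC ε →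
      ∀ (τ R Rt HX HΔ : ℝ), 0 < τ → τ ≤ 1 → 0 < R → 0 < Rt →
      ∀ (X : ℝ → U) (Y Y' : ℝ → V) (Z Z' : ℝ → P),
        (∀ s t : ℝ, 0 ≤ s → s ≤ t → t ≤ τ → ‖X t - X s‖ ≤ HX * (t - s) ^ γ) →
        Y 0 = Y' 0 →
        (∀ s t : ℝ, 0 ≤ s → s ≤ t → t ≤ τ → ‖Y t - Y s‖ ≤ R * (t - s) ^ κ) →
        (∀ s t : ℝ, 0 ≤ s → s ≤ t → t ≤ τ → ‖Y' t - Y' s‖ ≤ R * (t - s) ^ κ) →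
        (∀ s ∈ Set.Icc (0:ℝ) τ, ‖Y s‖ ≤ Rt) →
        (∀ s ∈ Set.Icc (0:ℝ) τ, ‖Y' s‖ ≤ Rt) →
        (∀ s t : ℝ, 0 ≤ s → s ≤ t → t ≤ τ →
          ‖(Y t - Y' t) - (Y s - Y' s)‖ ≤ HΔ * (t - s) ^ κ) →
        (∀ t ∈ Set.Icc (0:ℝ) τ, ∀ ε' > (0:ℝ), ∃ d > (0:ℝ), ∀ (n : ℕ) (σ : ℕ → ℝ),
          σ 0 = 0 → σ n = t → (∀ i < n, σ i ≤ σ (i + 1)) →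
          (∀ i < n, σ (i + 1) - σ i < d) →
          ‖(∑ i ∈ Finset.range n, B (Y (σ i)) (X (σ (i + 1)) - X (σ i))) - Z t‖ < ε') →
        (∀ t ∈ Set.Icc (0:ℝ) τ, ∀ ε' > (0:ℝ), ∃ d > (0:ℝ), ∀ (n : ℕ) (σ : ℕ → ℝ),
          σ 0 = 0 → σ n = t → (∀ i < n, σ i ≤ σ (i + 1)) →
          (∀ i < n, σ (i + 1) - σ i < d) →
          ‖(∑ i ∈ Finset.range n, B (Y' (σ i)) (X (σ (i + 1)) - X (σ i))) - Z' t‖ < ε') →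
        ∀ s t : ℝ, 0 ≤ s → s ≤ t → t ≤ τ →
          ‖(Z t - Z' t) - (Z s - Z' s)‖ ≤
            (K * HX * (3 * MC Rt * (2 * R) ^ ε * τ ^ κ + MB Rt * τ ^ ((1 - ε) * κ) +
              MB Rt * τ ^ κ)) * HΔ * (t - s) ^ γ := by
  by_cases htriv : Nontrivial V ∧ Nontrivial U
  · obtain ⟨_, _⟩ := htriv
    refine ⟨youngConst (γ + κ * ε), ?_⟩
    intro B Cc MB MC hC τ R Rt HX HΔ hτ0 hτ1 hR hRt X Y Y' Z Z' hX h0 hY hY' hYb hYb' hΔ hZ hZ'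
      s t hs hst ht
    have hτκ : 0 < τ ^ κ := by positivity
    have hHX : 0 ≤ HX := by
      have := (norm_nonneg _).trans (hX 0 τ le_rfl hτ0.le le_rfl)
      exact nonneg_of_mul_nonneg_left this (by rw [sub_zero]; positivity)
    have hHΔ : 0 ≤ HΔ := by
      have := (norm_nonneg _).trans (hΔ 0 τ le_rfl hτ0.le le_rfl)
      exact nonneg_of_mul_nonneg_left this (by rw [sub_zero]; positivity)
    have hMB : 0 ≤ MB Rt := hC.localBound_nonneg hRt.le
    have hMC : 0 < MC Rt := hC.2.2.2.1 Rt
    have hε0 : 0 < ε := hC.2.2.2.2.1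
    have hε1 : ε ≤ 1 := hC.2.2.2.2.2.1
    have hsup : ∀ r : ℝ, 0 ≤ r → r ≤ τ → ‖Y r - Y' r‖ ≤ HΔ * τ ^ κ := by
      intro r hr hrτ
      have := hΔ 0 r le_rfl hr hrτ
      rw [h0, sub_self, sub_zero, sub_zero] at this
      exact this.trans (by gcongr)
    have hA : ∀ r : ℝ, 0 ≤ r → r ≤ τ → ∀ x,
        ‖B (Y r) x - B (Y' r) x‖ ≤ MB Rt * (HΔ * τ ^ κ) * ‖x‖ := by
      intro r hr hrτ x
      refine (hC.norm_sub_apply_le (hYb' r ⟨hr, hrτ⟩) (hYb r ⟨hr, hrτ⟩) x).trans ?_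
      have := hsup r hr hrτ
      gcongr
    have hL : ∀ p q : ℝ, 0 ≤ p → p ≤ q → q ≤ τ → ∀ x,
        ‖(B (Y q) x - B (Y' q) x) - (B (Y p) x - B (Y' p) x)‖ ≤
          ((MC Rt * R ^ ε * τ ^ κ + MB Rt * τ ^ ((1 - ε) * κ)) * HΔ) * (q - p) ^ (κ * ε) *
            ‖x‖ := by
      intro p q hp hpq hq x
      have hqp : 0 ≤ q - p := by linarith
      have mp : p ∈ Set.Icc (0 : ℝ) τ := ⟨hp, hpq.trans hq⟩
      have mq : q ∈ Set.Icc (0 : ℝ) τ := ⟨hp.trans hpq, hq⟩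
      refine (hC.norm_sub_sub_apply_le (hYb p mp) (hYb' p mp) (hYb q mq) (hYb' q mq)
        (hY p q hp hpq hq) (hY' p q hp hpq hq) x).trans ?_
      refine mul_le_mul_of_nonneg_right ?_ (norm_nonneg x)
      have hsplit : (q - p) ^ κ ≤ τ ^ ((1 - ε) * κ) * (q - p) ^ (κ * ε) := by
        have e : κ = (1 - ε) * κ + κ * ε := by ring
        have e0 : 0 ≤ (1 - ε) * κ := mul_nonneg (by linarith) hκ0.le
        calc (q - p) ^ κ = (q - p) ^ ((1 - ε) * κ) * (q - p) ^ (κ * ε) := by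
              rw [← Real.rpow_add_of_nonneg hqp e0 (by positivity), ← e]
          _ ≤ _ := by
              have : q - p ≤ τ := by linarith
              gcongr
      have hfirst : MC Rt * (R * (q - p) ^ κ) ^ ε * ‖Y q - Y' q‖ ≤
          MC Rt * (R ^ ε * (q - p) ^ (κ * ε)) * (HΔ * τ ^ κ) := by
        rw [Real.mul_rpow hR.le (by positivity), ← Real.rpow_mul hqp]
        have := hsup q mq.1 mq.2
        gcongr
      have hsecond : MB Rt * ‖(Y q - Y' q) - (Y p - Y' p)‖ ≤
          MB Rt * (HΔ * (τ ^ ((1 - ε) * κ) * (q - p) ^ (κ * ε))) := by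
        have := (hΔ p q hp hpq hq).trans (mul_le_mul_of_nonneg_left hsplit hHΔ)
        gcongr
      linarith
    have hmain := norm_sub_youngIntegral_le (F := fun r => B (Y r)) (F' := fun r => B (Y' r))
      (by positivity) hX hA hL hZ hZ' (by positivity) hHX (by positivity) hγκε hτ1 hs hst ht
    refine hmain.trans ?_
    have hK := one_le_youngConst hγκε
    have hK0 : 0 ≤ youngConst (γ + κ * ε) := by linarith
    have hts : 0 ≤ t - s := by linarith
    refine mul_le_mul_of_nonneg_right ?_ (by positivity)
    have hRle : MC Rt * R ^ ε * τ ^ κ ≤ 3 * MC Rt * (2 * R) ^ ε * τ ^ κ := by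
      have : R ≤ 2 * R := by linarith
      have : MC Rt ≤ 3 * MC Rt := by linarith
      gcongr
    have hAK : MB Rt * (HΔ * τ ^ κ) ≤ youngConst (γ + κ * ε) * (MB Rt * (HΔ * τ ^ κ)) :=
      le_mul_of_one_le_left (by positivity) hK
    calc HX * (MB Rt * (HΔ * τ ^ κ) + youngConst (γ + κ * ε) *
          ((MC Rt * R ^ ε * τ ^ κ + MB Rt * τ ^ ((1 - ε) * κ)) * HΔ))
        ≤ HX * (youngConst (γ + κ * ε) * (MB Rt * (HΔ * τ ^ κ)) + youngConst (γ + κ * ε) *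
          ((3 * MC Rt * (2 * R) ^ ε * τ ^ κ + MB Rt * τ ^ ((1 - ε) * κ)) * HΔ)) := by gcongr
      _ = _ := by ring
  · refine ⟨0, ?_⟩
    intro B Cc MB MC hC τ R Rt HX HΔ hτ0 hτ1 hR hRt X Y Y' Z Z' hX h0 hY hY' hYb hYb' hΔ hZ hZ'
      s t hs hst ht
    have hHX : 0 ≤ HX := by
      have := (norm_nonneg _).trans (hX 0 τ le_rfl hτ0.le le_rfl)
      exact nonneg_of_mul_nonneg_left this (by rw [sub_zero]; positivity)
    have hzero : ∀ (r : ℝ) (x : U), B (Y r) x - B (Y' r) x = 0 := by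
      intro r x
      rcases not_and_or.1 htriv with hV | hU
      · have := not_nontrivial_iff_subsingleton.1 hV
        rw [Subsingleton.elim (Y r) (Y' r), sub_self]
      · have := not_nontrivial_iff_subsingleton.1 hU
        rw [Subsingleton.elim x 0, map_zero, map_zero, sub_self]
    have hmain := norm_sub_youngIntegral_le (F := fun r => B (Y r)) (F' := fun r => B (Y' r))
      (A := 0) (L := 0) (β := κ * ε) le_rfl hX (by simp [hzero]) (by simp [hzero]) hZ hZ' le_rfl
      hHX (by linarith) hγκε hτ1 hs hst ht
    simpa using hmain
end

section
/- Let α∈(0,1) and q≥1 with αq>1, and let σ∈C_b²(ℝ) (twice continuously differentiable with σ, σ', σ'' bounded). Then there exists a constant c, depending only on α and q, such that for all continuous functions h, w, ψ: [0,1]→ℝ with finite norms ‖h‖_{α,q}, ‖w‖_{α,q}, ‖ψ‖_{α,q}: ‖σ'(h)·w·ψ‖_{α,q} ≤ c·(‖σ'‖_∞ + ‖σ''‖_∞)·(‖w‖_∞ + ‖w‖_{α,q})·(‖ψ‖_∞ + ‖ψ‖_{α,q})·(1 + ‖h‖_{α,q}), where σ'(h)·w·ψ denotes the pointwise product x ↦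 σ'(h(x))w(x)ψ(x). (This is the key multiplicative estimate, obtained by splitting the Gagliardo seminorm of σ'(h)wψ into the four terms corresponding to increments of σ'(h), of w and of ψ.) -/
open MeasureTheory

/-- The fractional Sobolev (Gagliardo) norm
`‖φ‖_{α,q} = ( ‖φ‖_{L^q(0,1)}^q + ∫∫_{[0,1]²} |φ(x)-φ(y)|^q / |x-y|^{1+αq} dx dy )^{1/q}`. -/
noncomputable def sobNorm (α q : ℝ) (φ : ℝ → ℝ) : ENNReal :=
  ((∫⁻ x in Set.Icc (0:ℝ) 1, ENNReal.ofReal (|φ x| ^ q)) +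
    ∫⁻ x in Set.Icc (0:ℝ) 1, ∫⁻ y in Set.Icc (0:ℝ) 1,
      ENNReal.ofReal (|φ x - φ y| ^ q / |x - y| ^ (1 + α * q))) ^ (1 / q)

/-- The integrand of the Gagliardo seminorm. -/
noncomputable def gagliardoKernel (α q : ℝ) (φ : ℝ → ℝ) (x y : ℝ) : ENNReal :=
  ENNReal.ofReal (|φ x - φ y| ^ q / |x - y| ^ (1 + α * q))

/-- The `q`-th power of `sobNorm α q φ`. -/
noncomputable def sobEnergy (α q : ℝ) (φ : ℝ → ℝ) : ENNReal :=
  (∫⁻ x in Set.Icc (0:ℝ) 1, ENNReal.ofReal (|φ x| ^ q)) +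
    ∫⁻ x in Set.Icc (0:ℝ) 1, ∫⁻ y in Set.Icc (0:ℝ) 1, gagliardoKernel α q φ x y

theorem sobNorm_eq_sobEnergy_rpow (α q : ℝ) (φ : ℝ → ℝ) :
    sobNorm α q φ = sobEnergy α q φ ^ (1 / q) := rfl

theorem sobNorm_rpow_eq_sobEnergy {α q : ℝ} (hq : 0 < q) (φ : ℝ → ℝ) :
    sobNorm α q φ ^ q = sobEnergy α q φ := by
  rw [sobNorm_eq_sobEnergy_rpow, ← ENNReal.rpow_mul, one_div_mul_cancel hq.ne', ENNReal.rpow_one]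

theorem measurable_gagliardoKernel (α q : ℝ) {φ : ℝ → ℝ} (hφ : Measurable φ) :
    Measurable (Function.uncurry (gagliardoKernel α q φ)) := by
  unfold gagliardoKernel Function.uncurry
  fun_prop

theorem Real.rpow_le_three_rpow_mul_of_le_add {q a b c d : ℝ} (hq : 0 ≤ q) (ha : 0 ≤ a)
    (hb : 0 ≤ b) (hc : 0 ≤ c) (hd : 0 ≤ d) (h : d ≤ a + b + c) :
    d ^ q ≤ 3 ^ q * (a ^ q + b ^ q + c ^ q) := by
  have key : ∀ m : ℝ, 0 ≤ m → d ≤ 3 * m → d ^ q ≤ 3 ^ q * m ^ q := fun m hm hdm => by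
    rw [← Real.mul_rpow (by norm_num) hm]
    exact Real.rpow_le_rpow hd hdm hq
  have ha' := Real.rpow_nonneg ha q
  have hb' := Real.rpow_nonneg hb q
  have hc' := Real.rpow_nonneg hc q
  have hcases : d ≤ 3 * a ∨ d ≤ 3 * b ∨ d ≤ 3 * c := by
    by_contra! hlt
    linarith
  rcases hcases with h | h | h
  · exact (key a ha h).trans (by gcongr; linarith)
  · exact (key b hb h).trans (by gcongr; linarith)
  · exact (key c hc h).trans (by gcongr; linarith)

/-- If the increments and the values of `f` are dominated by linear combinations of those of
`u`, `v`, `w`, then so is its Gagliardo energy. -/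
theorem sobEnergy_le_of_abs_le {α q A B C : ℝ} {f u v w : ℝ → ℝ} (hq : 0 < q)
    (hA : 0 ≤ A) (hB : 0 ≤ B) (hC : 0 ≤ C)
    (hu : Measurable u) (hv : Measurable v) (hw : Measurable w)
    (hval : ∀ x ∈ Set.Icc (0:ℝ) 1, |f x| ≤ A * |u x| + B * |v x| + C * |w x|)
    (hinc : ∀ x ∈ Set.Icc (0:ℝ) 1, ∀ y ∈ Set.Icc (0:ℝ) 1,
      |f x - f y| ≤ A * |u x - u y| + B * |v x - v y| + C * |w x - w y|) :
    sobEnergy α q f ≤ ENNReal.ofReal (3 ^ q) * (ENNReal.ofReal (A ^ q) * sobEnergy α q u +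
      ENNReal.ofReal (B ^ q) * sobEnergy α q v + ENNReal.ofReal (C ^ q) * sobEnergy α q w) := by
  have pointwise : ∀ d a b c k : ℝ, 0 ≤ k → 0 ≤ d → 0 ≤ a → 0 ≤ b → 0 ≤ c →
      d ≤ A * a + B * b + C * c →
      ENNReal.ofReal (d ^ q / k) ≤ ENNReal.ofReal (3 ^ q) *
        (ENNReal.ofReal (A ^ q) * ENNReal.ofReal (a ^ q / k) +
          ENNReal.ofReal (B ^ q) * ENNReal.ofReal (b ^ q / k) +
          ENNReal.ofReal (C ^ q) * ENNReal.ofReal (c ^ q / k)) := by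
    intro d a b c k hk hd ha hb hc h
    rw [← ENNReal.ofReal_mul (by positivity), ← ENNReal.ofReal_mul (by positivity),
      ← ENNReal.ofReal_mul (by positivity), ← ENNReal.ofReal_add (by positivity) (by positivity),
      ← ENNReal.ofReal_add (by positivity) (by positivity), ← ENNReal.ofReal_mul (by positivity)]
    apply ENNReal.ofReal_le_ofReal
    have := Real.rpow_le_three_rpow_mul_of_le_add hq.le (mul_nonneg hA ha) (mul_nonneg hB hb)
      (mul_nonneg hC hc) hd h
    rw [Real.mul_rpow hA ha, Real.mul_rpow hB hb, Real.mul_rpow hC hc] at this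
    calc d ^ q / k ≤ 3 ^ q * (A ^ q * a ^ q + B ^ q * b ^ q + C ^ q * c ^ q) / k := by gcongr
      _ = _ := by ring
  have integral_comb : ∀ (F G H : ℝ → ENNReal), Measurable F → Measurable G → Measurable H →
      ∫⁻ x in Set.Icc (0:ℝ) 1, ENNReal.ofReal (3 ^ q) * (ENNReal.ofReal (A ^ q) * F x +
        ENNReal.ofReal (B ^ q) * G x + ENNReal.ofReal (C ^ q) * H x) =
      ENNReal.ofReal (3 ^ q) * (ENNReal.ofReal (A ^ q) * (∫⁻ x in Set.Icc (0:ℝ) 1, F x) +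
        ENNReal.ofReal (B ^ q) * (∫⁻ x in Set.Icc (0:ℝ) 1, G x) +
        ENNReal.ofReal (C ^ q) * (∫⁻ x in Set.Icc (0:ℝ) 1, H x)) := by
    intro F G H hF hG hH
    rw [lintegral_const_mul _ (by fun_prop), lintegral_add_left (by fun_prop),
      lintegral_add_left (by fun_prop), lintegral_const_mul _ hF, lintegral_const_mul _ hG,
      lintegral_const_mul _ hH]
  have hL : ∫⁻ x in Set.Icc (0:ℝ) 1, ENNReal.ofReal (|f x| ^ q) ≤
      ENNReal.ofReal (3 ^ q) *
        (ENNReal.ofReal (A ^ q) * (∫⁻ x in Set.Icc (0:ℝ) 1, ENNReal.ofReal (|u x| ^ q)) +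
        ENNReal.ofReal (B ^ q) * (∫⁻ x in Set.Icc (0:ℝ) 1, ENNReal.ofReal (|v x| ^ q)) +
        ENNReal.ofReal (C ^ q) * (∫⁻ x in Set.Icc (0:ℝ) 1, ENNReal.ofReal (|w x| ^ q))) := by
    rw [← integral_comb _ _ _ (by fun_prop) (by fun_prop) (by fun_prop)]
    refine setLIntegral_mono' measurableSet_Icc fun x hx => ?_
    simpa only [div_one] using pointwise _ _ _ _ 1 zero_le_one (abs_nonneg (f x))
      (abs_nonneg (u x)) (abs_nonneg (v x)) (abs_nonneg (w x)) (hval x hx)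
  have hG : ∫⁻ x in Set.Icc (0:ℝ) 1, ∫⁻ y in Set.Icc (0:ℝ) 1, gagliardoKernel α q f x y ≤
      ENNReal.ofReal (3 ^ q) * (ENNReal.ofReal (A ^ q) *
          (∫⁻ x in Set.Icc (0:ℝ) 1, ∫⁻ y in Set.Icc (0:ℝ) 1, gagliardoKernel α q u x y) +
        ENNReal.ofReal (B ^ q) *
          (∫⁻ x in Set.Icc (0:ℝ) 1, ∫⁻ y in Set.Icc (0:ℝ) 1, gagliardoKernel α q v x y) +
        ENNReal.ofReal (C ^ q) *
          (∫⁻ x in Set.Icc (0:ℝ) 1, ∫⁻ y in Set.Icc (0:ℝ) 1, gagliardoKernel α q w x y)) := by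
    rw [← integral_comb _ _ _ (measurable_gagliardoKernel α q hu).lintegral_prod_right
      (measurable_gagliardoKernel α q hv).lintegral_prod_right
      (measurable_gagliardoKernel α q hw).lintegral_prod_right]
    refine setLIntegral_mono' measurableSet_Icc fun x hx => ?_
    rw [← integral_comb _ _ _
      (measurable_gagliardoKernel α q hu).of_uncurry_left
      (measurable_gagliardoKernel α q hv).of_uncurry_left
      (measurable_gagliardoKernel α q hw).of_uncurry_left]
    refine setLIntegral_mono' measurableSet_Icc fun y hy => ?_
    exact pointwise _ _ _ _ _ (Real.rpow_nonneg (abs_nonneg (x - y)) _) (abs_nonneg (f x - f y))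
      (abs_nonneg (u x - u y)) (abs_nonneg (v x - v y)) (abs_nonneg (w x - w y))
      (hinc x hx y hy)
  refine (add_le_add hL hG).trans_eq ?_
  simp only [sobEnergy]
  ring

theorem ofReal_rpow_mul_sobEnergy_le {α q K : ℝ} {φ : ℝ → ℝ} {R : ENNReal} (hq : 0 < q)
    (hK : 0 ≤ K) (h : ENNReal.ofReal K * sobNorm α q φ ≤ R) :
    ENNReal.ofReal (K ^ q) * sobEnergy α q φ ≤ R ^ q := by
  rw [← sobNorm_rpow_eq_sobEnergy hq, ← ENNReal.ofReal_rpow_of_nonneg hK hq.le,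
    ← ENNReal.mul_rpow_of_nonneg _ _ hq.le]
  exact ENNReal.rpow_le_rpow h hq.le

theorem sobNorm_le_of_abs_le {α q A B C : ℝ} {f u v w : ℝ → ℝ} {R : ENNReal} (hq : 1 ≤ q)
    (hA : 0 ≤ A) (hB : 0 ≤ B) (hC : 0 ≤ C)
    (hu : Measurable u) (hv : Measurable v) (hw : Measurable w)
    (hval : ∀ x ∈ Set.Icc (0:ℝ) 1, |f x| ≤ A * |u x| + B * |v x| + C * |w x|)
    (hinc : ∀ x ∈ Set.Icc (0:ℝ) 1, ∀ y ∈ Set.Icc (0:ℝ) 1,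
      |f x - f y| ≤ A * |u x - u y| + B * |v x - v y| + C * |w x - w y|)
    (hAR : ENNReal.ofReal A * sobNorm α q u ≤ R) (hBR : ENNReal.ofReal B * sobNorm α q v ≤ R)
    (hCR : ENNReal.ofReal C * sobNorm α q w ≤ R) :
    sobNorm α q f ≤ 9 * R := by
  have hq0 : 0 < q := by linarith
  have h3 : (3 : ENNReal) ≤ 3 ^ q := by
    conv_lhs => rw [← ENNReal.rpow_one 3]
    exact ENNReal.rpow_le_rpow_of_exponent_le (by norm_num) hq
  rw [← ENNReal.rpow_le_rpow_iff hq0, sobNorm_rpow_eq_sobEnergy hq0]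
  calc sobEnergy α q f
      ≤ ENNReal.ofReal (3 ^ q) * (R ^ q + R ^ q + R ^ q) :=
        (sobEnergy_le_of_abs_le hq0 hA hB hC hu hv hw hval hinc).trans <| by
          gcongr <;> exact ofReal_rpow_mul_sobEnergy_le hq0 ‹_› ‹_›
    _ = 3 ^ q * (3 * R ^ q) := by
        rw [← ENNReal.ofReal_rpow_of_nonneg (by norm_num) hq0.le, ENNReal.ofReal_ofNat]
        ring
    _ ≤ 3 ^ q * (3 ^ q * R ^ q) := by gcongr
    _ = (9 * R) ^ q := by
        rw [← ENNReal.mul_rpow_of_nonneg _ _ hq0.le, ← ENNReal.mul_rpow_of_nonneg _ _ hq0.le,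
          ← mul_assoc]
        norm_num

theorem abs_mul_mul_sub_mul_mul_le {a a' b b' c c' A B C : ℝ} (ha' : |a'| ≤ A)
    (hb : |b| ≤ B) (hb' : |b'| ≤ B) (hc : |c| ≤ C) :
    |a * b * c - a' * b' * c'| ≤
      B * C * |a - a'| + A * C * |b - b'| + A * B * |c - c'| := by
  have hA := (abs_nonneg _).trans ha'
  have hB := (abs_nonneg _).trans hb
  have hsplit : a * b * c - a' * b' * c' =
      b * c * (a - a') + a' * c * (b - b') + a' * b' * (c - c') := by ring
  rw [hsplit]
  refine (abs_add_three _ _ _).trans ?_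
  simp only [abs_mul]
  gcongr

/-- **The key multiplicative estimate (Step 2 in the proof of Theorem `nonheat`).**
Let `α ∈ (0,1)`, `q ≥ 1` with `αq > 1` and `σ ∈ C_b²(ℝ)`.  There is a constant
`c`, depending only on `α` and `q`, such that for all continuous `h, w, ψ`
on `[0,1]` with finite `‖·‖_{α,q}`-norms (`Ms1, Ms2` bounding `|σ'|, |σ''|`, and
`Mw, Mψ` bounding `|w|, |ψ|` on `[0,1]`):
`‖σ'(h)·w·ψ‖_{α,q} ≤ c·(‖σ'‖_∞+‖σ''‖_∞)·(‖w‖_∞+‖w‖_{α,q})·(‖ψ‖_∞+‖ψ‖_{α,q})·(1+‖h‖_{α,q})`. -/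
theorem sobolev_multiplicative_estimate
    (α q : ℝ) (hα0 : 0 < α) (hα1 : α < 1) (hq : 1 ≤ q) (hαq : 1 < α * q) :
    ∃ c : ℝ, 0 < c ∧
      ∀ (σ h w ψ : ℝ → ℝ) (Ms0 Ms1 Ms2 Mw Mψ : ℝ),
        ContDiff ℝ 2 σ →
        (∀ x, |σ x| ≤ Ms0) → (∀ x, |deriv σ x| ≤ Ms1) →
        (∀ x, |deriv (deriv σ) x| ≤ Ms2) →
        Continuous h → Continuous w → Continuous ψ →
        (∀ x ∈ Set.Icc (0:ℝ) 1, |w x| ≤ Mw) →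
        (∀ x ∈ Set.Icc (0:ℝ) 1, |ψ x| ≤ Mψ) →
        sobNorm α q h ≠ ⊤ → sobNorm α q w ≠ ⊤ → sobNorm α q ψ ≠ ⊤ →
        sobNorm α q (fun x => deriv σ (h x) * w x * ψ x) ≤
          ENNReal.ofReal (c * (Ms1 + Ms2)) *
            (ENNReal.ofReal Mw + sobNorm α q w) *
            (ENNReal.ofReal Mψ + sobNorm α q ψ) *
            (1 + sobNorm α q h) := by
  refine ⟨9, by norm_num, ?_⟩
  intro σ h w ψ Ms0 Ms1 Ms2 Mw Mψ hσ _ hs1 hs2 hh hw hψ hMw hMψ _ _ _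
  have hMs1 : 0 ≤ Ms1 := (abs_nonneg _).trans (hs1 0)
  have hMs2 : 0 ≤ Ms2 := (abs_nonneg _).trans (hs2 0)
  have hMw0 : 0 ≤ Mw := (abs_nonneg _).trans (hMw 0 (by simp))
  have hMψ0 : 0 ≤ Mψ := (abs_nonneg _).trans (hMψ 0 (by simp))
  have hdiff : Differentiable ℝ (deriv σ) :=
    (ContDiff.deriv' (n := 1) hσ).differentiable one_ne_zero
  have hlip : ∀ s t, |deriv σ s - deriv σ t| ≤ Ms2 * |s - t| := fun s t =>
    convex_univ.norm_image_sub_le_of_norm_deriv_le (fun x _ => hdiff x) (fun x _ => hs2 x)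
      (Set.mem_univ t) (Set.mem_univ s)
  rw [ENNReal.ofReal_mul (by norm_num), ENNReal.ofReal_ofNat]
  simp only [mul_assoc (9 : ENNReal)]
  refine sobNorm_le_of_abs_le (A := Mw * Mψ * Ms2) (B := Ms1 * Mψ) (C := Ms1 * Mw) hq
    (by positivity) (by positivity) (by positivity) hh.measurable hw.measurable hψ.measurable
    ?_ ?_ ?_ ?_ ?_
  · intro x hx
    have hprod : |deriv σ (h x) * w x * ψ x| ≤ Ms1 * Mψ * |w x| := by
      rw [abs_mul, abs_mul, mul_right_comm]
      gcongr
      exacts [hs1 _, hMψ x hx]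
    have : 0 ≤ Mw * Mψ * Ms2 * |h x| := by positivity
    have : 0 ≤ Ms1 * Mw * |ψ x| := by positivity
    linarith
  · intro x hx y hy
    refine (abs_mul_mul_sub_mul_mul_le (hs1 (h y)) (hMw x hx) (hMw y hy) (hMψ x hx)).trans ?_
    rw [mul_assoc (Mw * Mψ) Ms2]
    gcongr
    exact hlip _ _
  · calc ENNReal.ofReal (Mw * Mψ * Ms2) * sobNorm α q h
        = ENNReal.ofReal Ms2 * ENNReal.ofReal Mw * ENNReal.ofReal Mψ * sobNorm α q h := by
          rw [ENNReal.ofReal_mul (by positivity), ENNReal.ofReal_mul hMw0]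
          ring
      _ ≤ _ := by
          gcongr
          exacts [by linarith, le_self_add, le_self_add, le_add_self]
  · calc ENNReal.ofReal (Ms1 * Mψ) * sobNorm α q w
        = ENNReal.ofReal Ms1 * sobNorm α q w * ENNReal.ofReal Mψ * 1 := by
          rw [ENNReal.ofReal_mul hMs1]
          ring
      _ ≤ _ := by
          gcongr
          exacts [by linarith, le_add_self, le_self_add, le_self_add]
  · calc ENNReal.ofReal (Ms1 * Mw) * sobNorm α q ψ
        = ENNReal.ofReal Ms1 * ENNReal.ofReal Mw * sobNorm α q ψ * 1 := by
          rw [ENNReal.ofReal_mul hMs1]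
          ring
      _ ≤ _ := by
          gcongr
          exacts [by linarith, le_self_add, le_add_self, le_self_add]
end
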